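/- arXiv:1603.00045 — 2 statements merged into one kernel-verified Lean document; each statement's English description precedes it below -/
import Mathlib

section
/- Let R be a commutative noetherian ring. Then i(R) = sup { i(R_m) : m a maximal ideal of R }, where R_m denotes the localization of R at m; in particular, for an integer k ≥ 0, one has \overline{J}^n ⊆ J^{n−k} for every ideal J of R and every n ≥ k if and only if the same holds in R_m for every maximal ideal m of R. -/
/-!
The content is that integral closure of ideals commutes with localization
(`map_intClosure_eq`): an integral equation over `M⁻¹J` has its denominators cleared by scaling
the root, since replacing `x` by `c * x` replaces the coefficients `a i ∈ J ^ i` by `c ^ i * a i`.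
As powers also commute with localization, and every ideal of a localization is extended from `R`,
the bound `\overline J ^ n ⊆ J ^ (n - k)` passes from `R` to its localizations; it passes back
because containment of ideals may be checked at the maximal ideals. The formula for `i(R)` follows,
because the bound for `k` implies the bound for every larger integer, so that `i(R) ≤ k` says
exactly that the bound holds for `k`.
-/


/-- An element `x` is integral over the ideal `J`: it satisfies an equation
`x ^ n + a 1 * x ^ (n - 1) + ⋯ + a n = 0` with `a i ∈ J ^ i` for `1 ≤ i ≤ n`. -/
def IsIntegralOverIdeal {R : Type*} [CommRing R] (J : Ideal R) (x : R) : Prop :=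
  ∃ n : ℕ, 0 < n ∧ ∃ a : ℕ → R, (∀ i, 1 ≤ i → i ≤ n → a i ∈ J ^ i) ∧
    x ^ n + ∑ i ∈ Finset.Icc 1 n, a i * x ^ (n - i) = 0

/-- The integral closure `\overline J` of an ideal `J`: the ideal of all elements integral
over `J` (realized as the ideal generated by this set, which is in fact already an ideal). -/
def Ideal.intClosure {R : Type*} [CommRing R] (J : Ideal R) : Ideal R :=
  Ideal.span {x | IsIntegralOverIdeal J x}

/-- `IntDimBound R k` : `\overline J ^ n ⊆ J ^ (n - k)` for every ideal `J` of `R` and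
every `n ≥ k`. -/
def IntDimBound (R : Type*) [CommRing R] (k : ℕ) : Prop :=
  ∀ (J : Ideal R) (n : ℕ), k ≤ n → (Ideal.intClosure J) ^ n ≤ J ^ (n - k)

/-- The integral dimension `i(R)` : the least integer `k ≥ 0` such that
`\overline J ^ n ⊆ J ^ (n - k)` for every ideal `J` of `R` and every `n ≥ k`,
and `∞` if no such `k` exists. -/
noncomputable def integralDimension (R : Type*) [CommRing R] : ℕ∞ :=
  sInf {k : ℕ∞ | ∃ k0 : ℕ, k = k0 ∧ IntDimBound R k0}

lemma IsIntegralOverIdeal.map {R S : Type*} [CommRing R] [CommRing S] (f : R →+* S)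
    {J : Ideal R} {x : R} (h : IsIntegralOverIdeal J x) :
    IsIntegralOverIdeal (J.map f) (f x) := by
  obtain ⟨n, hn, a, ha, he⟩ := h
  refine ⟨n, hn, fun i => f (a i), fun i h1 h2 => ?_, ?_⟩
  · rw [← Ideal.map_pow]
    exact Ideal.mem_map_of_mem f (ha i h1 h2)
  · simpa using congrArg f he

/-- Multiplying the root of a monic polynomial by `c` multiplies the `i`-th coefficient
by `c ^ i` and the value by `c ^ n`. -/
lemma scaled_equation {R : Type*} [CommRing R] (c x : R) (a : ℕ → R) (n : ℕ) :
    (c * x) ^ n + ∑ i ∈ Finset.Icc 1 n, (c ^ i * a i) * (c * x) ^ (n - i) =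
      c ^ n * (x ^ n + ∑ i ∈ Finset.Icc 1 n, a i * x ^ (n - i)) := by
  rw [mul_add, Finset.mul_sum, mul_pow]
  congr 1
  refine Finset.sum_congr rfl fun i hi => ?_
  have h : c ^ n = c ^ i * c ^ (n - i) := by
    rw [← pow_add, Nat.add_sub_cancel' (Finset.mem_Icc.1 hi).2]
  rw [h, mul_pow]
  ring

lemma IsIntegralOverIdeal.mul_left {R : Type*} [CommRing R] {J : Ideal R} {x : R} (c : R)
    (h : IsIntegralOverIdeal J x) : IsIntegralOverIdeal J (c * x) := by
  obtain ⟨n, hn, a, ha, he⟩ := h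
  refine ⟨n, hn, fun i => c ^ i * a i, fun i h1 h2 => Ideal.mul_mem_left _ _ (ha i h1 h2), ?_⟩
  rw [scaled_equation, he, mul_zero]

/-- An element of `R` which becomes integral over the extension of `J` to a localization is
integral over `J` after multiplication by some element of the multiplicative set. -/
lemma exists_mul_isIntegralOverIdeal {R S : Type*} [CommRing R] [CommRing S] [Algebra R S]
    (M : Submonoid R) [IsLocalization M S] {J : Ideal R} {y : R}
    (h : IsIntegralOverIdeal (J.map (algebraMap R S)) (algebraMap R S y)) :
    ∃ t ∈ M, IsIntegralOverIdeal J (t * y) := by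
  obtain ⟨n, hn, a, ha, he⟩ := h
  have h1 : ∀ i, ∃ s ∈ M, i ∈ Finset.Icc 1 n →
      ∃ b ∈ J ^ i, algebraMap R S s * a i = algebraMap R S b := by
    intro i
    by_cases hi : i ∈ Finset.Icc 1 n
    · have h2 := ha i (Finset.mem_Icc.1 hi).1 (Finset.mem_Icc.1 hi).2
      rw [← Ideal.map_pow, IsLocalization.mem_map_algebraMap_iff M S] at h2
      obtain ⟨⟨b, s⟩, hb⟩ := h2
      exact ⟨s, s.2, fun _ => ⟨b, b.2, by rw [mul_comm]; exact hb⟩⟩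
    · exact ⟨1, M.one_mem, fun h => absurd h hi⟩
  choose s hsM hs using h1
  -- a common denominator of the coefficients
  let t := ∏ i ∈ Finset.Icc 1 n, s i
  have htM : t ∈ M := M.prod_mem fun i _ => hsM i
  have h2 : ∀ i, ∃ b, i ∈ Finset.Icc 1 n →
      b ∈ J ^ i ∧ algebraMap R S b = algebraMap R S t ^ i * a i := by
    intro i
    by_cases hi : i ∈ Finset.Icc 1 n
    · obtain ⟨b, hb, hb'⟩ := hs i hi
      have hd : s i ∣ t ^ i :=
        (Finset.dvd_prod_of_mem s hi).trans
          (dvd_pow_self t (Nat.one_le_iff_ne_zero.1 (Finset.mem_Icc.1 hi).1))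
      obtain ⟨c, hc⟩ := hd
      refine ⟨c * b, fun _ => ⟨Ideal.mul_mem_left _ _ hb, ?_⟩⟩
      rw [← map_pow, hc, map_mul, map_mul, ← hb']
      ring
    · exact ⟨0, fun h => absurd h hi⟩
  choose b hb using h2
  have h3 : algebraMap R S
      ((t * y) ^ n + ∑ i ∈ Finset.Icc 1 n, b i * (t * y) ^ (n - i)) = 0 := by
    have h4 := scaled_equation (algebraMap R S t) (algebraMap R S y) a n
    rw [he, mul_zero] at h4
    rw [← h4, map_add, map_sum, map_pow, map_mul]
    congr 1
    refine Finset.sum_congr rfl fun i hi => ?_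
    rw [map_mul, (hb i hi).2, map_pow, map_mul]
  obtain ⟨u, hu⟩ := (IsLocalization.map_eq_zero_iff M S _).1 h3
  refine ⟨u * t, M.mul_mem u.2 htM, n, hn, fun i => (u : R) ^ i * b i, fun i h1 h2 =>
    Ideal.mul_mem_left _ _ (hb i (Finset.mem_Icc.2 ⟨h1, h2⟩)).1, ?_⟩
  rw [mul_assoc, scaled_equation]
  obtain ⟨m, rfl⟩ := Nat.exists_eq_succ_of_ne_zero hn.ne'
  rw [pow_succ, mul_assoc, hu, mul_zero]

/-- Integral closure of ideals commutes with localization. -/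
lemma map_intClosure_eq {R : Type*} (S : Type*) [CommRing R] [CommRing S] [Algebra R S]
    (M : Submonoid R) [IsLocalization M S] (J : Ideal R) :
    (Ideal.intClosure J).map (algebraMap R S) =
      Ideal.intClosure (J.map (algebraMap R S)) := by
  apply le_antisymm
  · rw [Ideal.intClosure, Ideal.map_span, Ideal.span_le]
    rintro _ ⟨x, hx, rfl⟩
    exact Ideal.subset_span (IsIntegralOverIdeal.map _ hx)
  · rw [Ideal.intClosure, Ideal.span_le]
    intro x hx
    obtain ⟨⟨y, s⟩, hy⟩ := IsLocalization.surj M x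
    have h1 : IsIntegralOverIdeal (J.map (algebraMap R S)) (algebraMap R S y) := by
      rw [← hy, mul_comm]
      exact IsIntegralOverIdeal.mul_left _ hx
    obtain ⟨t, ht, h2⟩ := exists_mul_isIntegralOverIdeal M h1
    refine (IsLocalization.mem_map_algebraMap_iff M S).2
      ⟨⟨⟨t * y, Ideal.subset_span h2⟩, ⟨t, ht⟩ * s⟩, ?_⟩
    change x * algebraMap R S (t * s) = algebraMap R S (t * y)
    rw [map_mul, map_mul, ← hy]
    ring

lemma IntDimBound.localization {R : Type*} (S : Type*) [CommRing R] [CommRing S] [Algebra R S]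
    (M : Submonoid R) [IsLocalization M S] {k : ℕ} (h : IntDimBound R k) :
    IntDimBound S k := by
  intro J n hn
  obtain ⟨I, rfl⟩ : ∃ I : Ideal R, I.map (algebraMap R S) = J :=
    ⟨_, IsLocalization.map_under M S J⟩
  rw [← map_intClosure_eq S M, ← Ideal.map_pow, ← Ideal.map_pow]
  exact Ideal.map_mono (h I n hn)

lemma intDimBound_iff_maximal {R : Type*} [CommRing R] (k : ℕ) : IntDimBound R k ↔
    ∀ (m : Ideal R) (hm : m.IsMaximal),
      IntDimBound (@Localization.AtPrime R _ m hm.isPrime) k := by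
  constructor
  · intro h m hm
    have := hm.isPrime
    exact h.localization (Localization.AtPrime m) m.primeCompl
  · intro h J n hn
    refine Ideal.le_of_localization_maximal fun m hm => ?_
    have := hm.isPrime
    rw [Ideal.map_pow, Ideal.map_pow, map_intClosure_eq (Localization.AtPrime m) m.primeCompl]
    exact h m hm _ n hn

lemma IntDimBound.mono {R : Type*} [CommRing R] {k l : ℕ} (hkl : k ≤ l)
    (h : IntDimBound R k) : IntDimBound R l := fun J n hn =>
  (h J n (hkl.trans hn)).trans (Ideal.pow_le_pow_right (Nat.sub_le_sub_left hkl n))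

lemma integralDimension_le_iff {R : Type*} [CommRing R] (k : ℕ) :
    integralDimension R ≤ k ↔ IntDimBound R k := by
  constructor
  · intro h
    -- an infimum in `ℕ∞` below `k`, hence below `k + 1`, is approached by a member of the set
    have h1 : integralDimension R < ((k + 1 : ℕ) : ℕ∞) :=
      h.trans_lt (by exact_mod_cast Nat.lt_succ_self k)
    obtain ⟨_, ⟨l, rfl, hl⟩, hlt⟩ := sInf_lt_iff.1 h1
    exact hl.mono (Nat.lt_succ_iff.1 (by exact_mod_cast hlt))
  · intro h
    exact sInf_le ⟨k, rfl, h⟩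

/-- For a commutative noetherian ring `R`, the integral dimension of `R` is the supremum of
the integral dimensions of the localizations of `R` at its maximal ideals; in particular, for
`k ≥ 0`, `\overline J ^ n ⊆ J ^ (n - k)` holds for all ideals `J` of `R` and all `n ≥ k` iff
the same holds in `R_m` for every maximal ideal `m`. -/
theorem integralDimension_eq_iSup_maximal {R : Type*} [CommRing R] [IsNoetherianRing R] :
    integralDimension R =
      (⨆ m : {m : Ideal R // m.IsMaximal},
        integralDimension (@Localization.AtPrime R _ m.1 m.2.isPrime)) ∧
    ∀ k : ℕ, IntDimBound R k ↔
      ∀ (m : Ideal R) (hm : m.IsMaximal),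
        IntDimBound (@Localization.AtPrime R _ m hm.isPrime) k := by
  refine ⟨?_, intDimBound_iff_maximal⟩
  have key : ∀ k : ℕ, integralDimension R ≤ k ↔
      (⨆ m : {m : Ideal R // m.IsMaximal},
        integralDimension (@Localization.AtPrime R _ m.1 m.2.isPrime)) ≤ k := by
    intro k
    simp only [integralDimension_le_iff, iSup_le_iff, intDimBound_iff_maximal (R := R),
      Subtype.forall]
  have aux : ∀ a b : ℕ∞, (∀ k : ℕ, b ≤ k → a ≤ k) → a ≤ b := by
    intro a b h
    induction b with
    | top => exact le_top
    | coe k => exact h k le_rfl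
  exact le_antisymm (aux _ _ fun k => (key k).2) (aux _ _ fun k => (key k).1)
end

section
/- Let R be a commutative noetherian ring with nilradical Q and R_red = R/Q. If i(R_red) < ∞ and R has the uniform Artin–Rees property, then i(R) < ∞; that is, if there is an integer k ≥ 0 such that for every ideal of R_red the containments \overline{J}^n ⊆ J^{n−k} hold for all n ≥ k, and R has the uniform Artin–Rees property, then there exists an integer k' ≥ 0 such that \overline{I}^n ⊆ I^{n−k'} for every ideal I of R and every n ≥ k'. -/
/-!
Write `C` for the integral closure of `J` and `Q` for the nilradical of `R`. Integral equations
survive in `R ⧸ Q`, so the bound `k` for `R ⧸ Q` gives `C ^ n ⊆ J ^ (n - k) + Q`. Since `J ⊆ C`,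
the `Q`-component of an element of `C ^ n` lies in `C ^ (n - k) ∩ Q`, and the uniform Artin–Rees
property for `Q ⊆ R`, applied to the ideal `C` (not to `J`), puts it in `C ^ (n - k - l) Q`, with `l`
independent of `J`. With `c = k + l` this reads `C ^ n ⊆ J ^ (n - c) + C ^ (n - c) Q`
(`intClosure_pow_le_step`). Iterating `m` times, where `Q ^ m = 0`, kills the second term, so
`k' = m * c` works.
-/

universe u v

/-- The uniform Artin–Rees property: for every pair `N ⊆ M` of finitely generated `R`-modules
there exists `k ≥ 0` such that `I ^ n M ∩ N ⊆ I ^ (n - k) N` for every ideal `I` of `R` and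
every `n ≥ k`. -/
def UniformArtinRees (R : Type u) [CommRing R] : Prop :=
  ∀ (M : Type v) [AddCommGroup M] [Module R M], Module.Finite R M →
    ∀ N : Submodule R M, ∃ k : ℕ, ∀ (I : Ideal R) (n : ℕ), k ≤ n →
      (I ^ n • (⊤ : Submodule R M)) ⊓ N ≤ I ^ (n - k) • N

lemma le_intClosure {R : Type*} [CommRing R] (J : Ideal R) : J ≤ J.intClosure := by
  intro x hx
  refine Ideal.subset_span ⟨1, one_pos, fun _ => -x, ?_, by simp⟩
  intro i h1 h2
  obtain rfl : i = 1 := le_antisymm h2 h1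
  simpa using hx

lemma map_intClosure_le {R S : Type*} [CommRing R] [CommRing S] (f : R →+* S) (J : Ideal R) :
    J.intClosure.map f ≤ (J.map f).intClosure := by
  rw [Ideal.map_le_iff_le_comap, Ideal.intClosure, Ideal.span_le]
  rintro x ⟨n, hn, a, ha, hx⟩
  refine Ideal.subset_span ⟨n, hn, fun i => f (a i), fun i h1 h2 => ?_, ?_⟩
  · rw [← Ideal.map_pow]
    exact Ideal.mem_map_of_mem f (ha i h1 h2)
  · simpa using congrArg f hx

/-- Integral dimension `≤ k` modulo an ideal `Q`, together with Artin–Rees for `Q ⊆ R` with respect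
to `J.intClosure`, trades one factor `Q` for a drop of `k + l` in the exponent. For `n < k + l` the
truncated exponent makes the right-hand side the unit ideal. -/
lemma intClosure_pow_le_step {R : Type*} [CommRing R] {Q : Ideal R} {k l : ℕ}
    (hk : IntDimBound (R ⧸ Q) k) (J : Ideal R)
    (hl : ∀ n, l ≤ n → J.intClosure ^ n ⊓ Q ≤ J.intClosure ^ (n - l) * Q) (n : ℕ) :
    J.intClosure ^ n ≤ J ^ (n - (k + l)) ⊔ J.intClosure ^ (n - (k + l)) * Q := by
  rcases lt_or_ge n (k + l) with h | h
  · simp [Nat.sub_eq_zero_of_le h.le]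
  have hkn : k ≤ n := by omega
  intro x hx
  have h1 : Ideal.Quotient.mk Q x ∈ (J ^ (n - k)).map (Ideal.Quotient.mk Q) := by
    rw [Ideal.map_pow]
    refine hk _ n hkn (Ideal.pow_right_mono (map_intClosure_le _ J) n ?_)
    rw [← Ideal.map_pow]
    exact Ideal.mem_map_of_mem _ hx
  obtain ⟨y, hy, hyx⟩ := (Ideal.mem_map_iff_of_surjective _ Ideal.Quotient.mk_surjective).1 h1
  have hq : x - y ∈ Q := Ideal.Quotient.eq.1 hyx.symm
  have hxy : x - y ∈ J.intClosure ^ (n - k) :=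
    sub_mem (Ideal.pow_le_pow_right (Nat.sub_le n k) hx)
      (Ideal.pow_right_mono (le_intClosure J) _ hy)
  have h2 := hl (n - k) (by omega) ⟨hxy, hq⟩
  rw [Nat.sub_sub] at h2
  have hy' : y ∈ J ^ (n - (k + l)) := Ideal.pow_le_pow_right (by omega) hy
  rw [← add_sub_cancel y x]
  exact add_mem (Ideal.mem_sup_left hy') (Ideal.mem_sup_right h2)

lemma pow_le_of_step {R : Type*} [CommRing R] {I J Q : Ideal R} {c : ℕ}
    (h : ∀ n, I ^ n ≤ J ^ (n - c) ⊔ I ^ (n - c) * Q) (m n : ℕ) :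
    I ^ n ≤ J ^ (n - m * c) ⊔ I ^ (n - m * c) * Q ^ m := by
  induction m with
  | zero => simp
  | succ m ih =>
    have e : n - m * c - c = n - (m + 1) * c := by rw [Nat.sub_sub, Nat.succ_mul]
    have h1 := h (n - m * c)
    rw [e] at h1
    refine ih.trans (sup_le ?_ ?_)
    · exact le_sup_of_le_left (Ideal.pow_le_pow_right (by rw [← e]; omega))
    · refine (Ideal.mul_mono_left h1).trans ?_
      rw [Ideal.sup_mul, mul_assoc, ← pow_succ']
      exact sup_le_sup_right Ideal.mul_le_left _

/-- Let `R` be a commutative noetherian ring with nilradical `Q` and `R_red = R ⧸ Q`. If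
`i(R_red) < ∞` (there is `k ≥ 0` with `\overline J ^ n ⊆ J ^ (n - k)` for every ideal `J` of
`R_red` and every `n ≥ k`) and `R` has the uniform Artin–Rees property, then `i(R) < ∞`:
there is `k' ≥ 0` with `\overline I ^ n ⊆ I ^ (n - k')` for every ideal `I` of `R` and every
`n ≥ k'`. -/
theorem intDimBound_of_red_and_uniformArtinRees {R : Type u} [CommRing R] [IsNoetherianRing R]
    (hred : ∃ k : ℕ, IntDimBound (R ⧸ nilradical R) k)
    (hUAR : UniformArtinRees.{u, u} R) :
    ∃ k' : ℕ, IntDimBound R k' := by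
  obtain ⟨k, hk⟩ := hred
  obtain ⟨l, hl⟩ := hUAR R inferInstance (nilradical R)
  obtain ⟨m, hm⟩ := IsNoetherianRing.isNilpotent_nilradical R
  refine ⟨m * (k + l), fun J n _ => ?_⟩
  have h := pow_le_of_step (intClosure_pow_le_step hk J
    (fun n hn => by simpa using hl J.intClosure n hn)) m n
  simpa [hm] using h
end
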